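/- Let G = (N, 𝒳, 𝒰) be a finite game and 𝒪 = O_1 × ⋯ × O_n rectangular with each O_i nonempty. Then the minimum, over all payment promises 𝒱 that implement 𝒪 (i.e., with 𝒳⋆_{G[𝒱]} ⊆ 𝒪), of max_{o∈𝒪} Σ_{i∈N} V_i(o) equals min_{F∈ℱ} κ(F). Moreover, if in addition G is equitable with respect to 𝒪 (for every player i, |O_i| ≤ |𝒳₋ᵢ \ 𝒪₋ᵢ|), then the minimum δ ≥ 0 for which there exists a payment promise 𝒱 implementing 𝒪 exactly (𝒳⋆_{G[𝒱]} = 𝒪) with cost(𝒱) ≤ δ also equals min_{F∈ℱ} κ(F). -/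

import Mathlib

/-!
Two facts give both equalities.

*Every implementation pays at least some `κ(F)`* (`exists_kappa_le_maxPay`). Since the game is
finite, every strategy is undominated or dominated by an undominated one. If `V` implements `𝒪`,
all undominated strategies of player `i` lie in `O_i`, so each `x ∉ O_i` has a dominator
`F_i x ∈ O_i`. Comparing `x` with `F_i x` at `o ∈ 𝒪` with `o_i = F_i x` gives
`V_i(o) ≥ U_i(x, o₋ᵢ) - U_i(o)`, hence `V_i(o) ≥ innerPay` and `maxPay V ≥ κ(F)`.

*Every `κ(F)` is reached up to `ε`* (`promise`). Pay nothing outside `O_i`, pay `innerPay + ε`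
on `𝒪`, and pay a huge amount for `o_i ∈ O_i` against `𝒳₋ᵢ ∖ 𝒪₋ᵢ`. Then `F_i x` dominates each
`x ∉ O_i` (`undom_promise_subset`). In an equitable game there is an injection
`O_i → 𝒳₋ᵢ ∖ 𝒪₋ᵢ`; a further bonus for `o_i` at its own image makes `o_i` the unique best reply
there, so every strategy of `O_i` is undominated and the implementation is exact
(`undom_promise_eq`), at no extra cost on `𝒪`.
-/

/-- In a game with player set `ι` and strategy sets `S i`, strategy `x` of player `i`
(weakly) dominates strategy `y`: `x` is at least as good against every profile of the
other players' strategies and strictly better against at least one. -/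
def Dominates {ι : Type*} [DecidableEq ι] {S : ι → Type*}
    (U : ι → (∀ j, S j) → ℝ) (i : ι) (x y : S i) : Prop :=
  (∀ σ : ∀ j, S j, U i (Function.update σ i y) ≤ U i (Function.update σ i x)) ∧
  (∃ σ : ∀ j, S j, U i (Function.update σ i y) < U i (Function.update σ i x))

/-- A strategy of player `i` is undominated if no strategy of player `i` dominates it. -/
def Undominated {ι : Type*} [DecidableEq ι] {S : ι → Type*}
    (U : ι → (∀ j, S j) → ℝ) (i : ι) (x : S i) : Prop :=
  ¬ ∃ y : S i, Dominates U i y x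

/-- The set `𝒳⋆` of strategy profiles consisting entirely of undominated strategies. -/
def UndomProfiles {ι : Type*} [DecidableEq ι] {S : ι → Type*}
    (U : ι → (∀ j, S j) → ℝ) : Set (∀ j, S j) :=
  {σ | ∀ i, Undominated U i (σ i)}

/-- The cost of a payment promise `V` for the game with utilities `U`:
the maximum, over undominated profiles of the modified game `G[V]`,
of the total payment. -/
noncomputable def gameCost {ι : Type*} [DecidableEq ι] [Fintype ι] {S : ι → Type*}
    (U V : ι → (∀ j, S j) → ℝ) : ℝ :=
  sSup ((fun σ => ∑ i, V i σ) '' UndomProfiles (fun i σ => U i σ + V i σ))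

/-- The rectangular strategy-profile region `O_1 × ⋯ × O_n`. -/
def rectSet {ι : Type*} {S : ι → Type*} (O : ∀ i, Set (S i)) : Set (∀ j, S j) :=
  {σ | ∀ i, σ i ∈ O i}

/-- `F = (F_1, …, F_n)` is a valid family for the rectangular region `O`:
each `F_i` maps every strategy outside `O_i` into `O_i`
(its values on `O_i` are irrelevant). -/
def ValidF {ι : Type*} {S : ι → Type*} (O : ∀ i, Set (S i))
    (F : ∀ i, S i → S i) : Prop :=
  ∀ i : ι, ∀ x : S i, x ∉ O i → F i x ∈ O i

/-- `max(0, max_{x_i ∈ F_i⁻¹(o_i), x_i ∉ O_i} (U_i(x_i, o₋ᵢ) − U_i(o_i, o₋ᵢ)))`,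
with the inner maximum over the empty set taken to be 0. -/
noncomputable def innerPay {ι : Type*} [DecidableEq ι] {S : ι → Type*}
    (U : ι → (∀ j, S j) → ℝ) (O : ∀ i, Set (S i)) (F : ∀ i, S i → S i)
    (i : ι) (o : ∀ j, S j) : ℝ :=
  sSup (insert (0 : ℝ)
    {r | ∃ x : S i, x ∉ O i ∧ F i x = o i ∧
      r = U i (Function.update o i x) - U i o})

/-- `κ(F) = max_{o ∈ 𝒪} Σ_{i ∈ N} innerPay i o`. -/
noncomputable def kappa {ι : Type*} [DecidableEq ι] [Fintype ι] {S : ι → Type*}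
    (U : ι → (∀ j, S j) → ℝ) (O : ∀ i, Set (S i)) (F : ∀ i, S i → S i) : ℝ :=
  sSup ((fun o => ∑ i, innerPay U O F i o) '' rectSet O)

/-- The worst-case payment over the region `O`: `max_{o ∈ 𝒪} Σ_i V_i(o)`. -/
noncomputable def maxPay {ι : Type*} [Fintype ι] {S : ι → Type*}
    (V : ι → (∀ j, S j) → ℝ) (O : ∀ i, Set (S i)) : ℝ :=
  sSup ((fun o => ∑ i, V i o) '' rectSet O)

/-- The game is equitable w.r.t. the rectangular region `O`: for each player `i`,
`|O_i| ≤ |𝒳₋ᵢ \ 𝒪₋ᵢ|`. -/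
def Equitable {ι : Type*} {S : ι → Type*} (O : ∀ i, Set (S i)) : Prop :=
  ∀ i : ι, (O i).ncard ≤
    Set.ncard {σ : (j : {j : ι // j ≠ i}) → S j.1 | ∃ j, σ j ∉ O j.1}

section Helpers

set_option linter.unusedSectionVars false

open Classical

variable {ι : Type*} [DecidableEq ι] {S : ι → Type*}

lemma Dominates.trans' {U : ι → (∀ j, S j) → ℝ} {i : ι} {x y z : S i}
    (h₁ : Dominates U i x y) (h₂ : Dominates U i y z) : Dominates U i x z := by
  refine ⟨fun σ => (h₂.1 σ).trans (h₁.1 σ), ?_⟩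
  obtain ⟨σ, hσ⟩ := h₁.2
  exact ⟨σ, (h₂.1 σ).trans_lt hσ⟩

lemma exists_undominated [∀ i, Fintype (S i)] (U : ι → (∀ j, S j) → ℝ) (i : ι) (x : S i) :
    ∃ y, Undominated U i y ∧ (y = x ∨ Dominates U i y x) := by
  have : IsTrans (S i) (Dominates U i) := ⟨fun _ _ _ h₁ h₂ => h₁.trans' h₂⟩
  have : Std.Irrefl (Dominates U i) := ⟨fun a h => by
    obtain ⟨σ, hσ⟩ := h.2
    exact lt_irrefl _ hσ⟩
  induction x using (Finite.wellFounded_of_trans_of_irrefl (Dominates U i)).induction with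
  | _ x ih =>
    by_cases hx : Undominated U i x
    · exact ⟨x, hx, Or.inl rfl⟩
    · obtain ⟨y, hy⟩ := not_not.mp hx
      obtain ⟨z, hz, h⟩ := ih y hy
      refine ⟨z, hz, Or.inr ?_⟩
      rcases h with rfl | h
      · exact hy
      · exact h.trans' hy

lemma rectSet_nonempty {O : ∀ i, Set (S i)} (hO : ∀ i, (O i).Nonempty) :
    (rectSet O).Nonempty :=
  ⟨fun i => (hO i).some, fun i => (hO i).some_mem⟩

/-- As every player has an undominated strategy, an inclusion of the product of the undominated
sets in `𝒪` holds factor by factor. -/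
lemma mem_of_undominated [∀ i, Fintype (S i)] [∀ i, Nonempty (S i)]
    {U : ι → (∀ j, S j) → ℝ} {O : ∀ i, Set (S i)} (h : UndomProfiles U ⊆ rectSet O)
    {i : ι} {x : S i} (hx : Undominated U i x) : x ∈ O i := by
  choose y hy _ using fun j => exists_undominated U j (Classical.arbitrary (S j))
  have hmem : Function.update y i x ∈ UndomProfiles U := by
    intro j
    by_cases hj : j = i
    · subst hj; simpa using hx
    · simpa [hj] using hy j
  simpa using h hmem i

lemma innerPay_bddAbove [∀ i, Fintype (S i)] (U : ι → (∀ j, S j) → ℝ) (O : ∀ i, Set (S i))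
    (F : ∀ i, S i → S i) (i : ι) (o : ∀ j, S j) :
    BddAbove (insert (0 : ℝ) {r | ∃ x : S i, x ∉ O i ∧ F i x = o i ∧
      r = U i (Function.update o i x) - U i o}) := by
  apply BddAbove.insert
  refine ((Set.finite_range fun x : S i => U i (Function.update o i x) - U i o).subset
    ?_).bddAbove
  rintro r ⟨x, _, _, rfl⟩
  exact ⟨x, rfl⟩

lemma innerPay_nonneg [∀ i, Fintype (S i)] (U : ι → (∀ j, S j) → ℝ) (O : ∀ i, Set (S i))
    (F : ∀ i, S i → S i) (i : ι) (o : ∀ j, S j) : 0 ≤ innerPay U O F i o :=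
  le_csSup (innerPay_bddAbove U O F i o) (Set.mem_insert _ _)

lemma le_innerPay [∀ i, Fintype (S i)] (U : ι → (∀ j, S j) → ℝ) (O : ∀ i, Set (S i))
    (F : ∀ i, S i → S i) (i : ι) (o : ∀ j, S j) (x : S i) (hx : x ∉ O i) (h : F i x = o i) :
    U i (Function.update o i x) - U i o ≤ innerPay U O F i o :=
  le_csSup (innerPay_bddAbove U O F i o) (Set.mem_insert_of_mem _ ⟨x, hx, h, rfl⟩)

variable [Fintype ι] [∀ i, Fintype (S i)]

lemma le_sSup_image (f : (∀ j, S j) → ℝ) {A : Set (∀ j, S j)} {o : ∀ j, S j} (ho : o ∈ A) :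
    f o ≤ sSup (f '' A) :=
  le_csSup (Set.toFinite _).bddAbove (Set.mem_image_of_mem f ho)

lemma kappa_nonneg (U : ι → (∀ j, S j) → ℝ) {O : ∀ i, Set (S i)}
    (hO : ∀ i, (O i).Nonempty) (F : ∀ i, S i → S i) : 0 ≤ kappa U O F := by
  obtain ⟨o, ho⟩ := rectSet_nonempty hO
  exact (Finset.sum_nonneg fun i _ => innerPay_nonneg U O F i o).trans
    (le_sSup_image (fun o => ∑ i, innerPay U O F i o) ho)

lemma maxPay_nonneg {V : ι → (∀ j, S j) → ℝ} (hV : ∀ i σ, 0 ≤ V i σ) {O : ∀ i, Set (S i)}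
    (hO : ∀ i, (O i).Nonempty) : 0 ≤ maxPay V O := by
  obtain ⟨o, ho⟩ := rectSet_nonempty hO
  exact (Finset.sum_nonneg fun i _ => hV i o).trans (le_sSup_image (fun o => ∑ i, V i o) ho)

/-- Lower bound: `F_i x` is chosen as an undominated dominator of `x ∉ O_i`. -/
lemma exists_kappa_le_maxPay [∀ i, Nonempty (S i)]
    (U : ι → (∀ j, S j) → ℝ) {O : ∀ i, Set (S i)} (hO : ∀ i, (O i).Nonempty)
    {V : ι → (∀ j, S j) → ℝ} (hV : ∀ i σ, 0 ≤ V i σ)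
    (h : UndomProfiles (fun i σ => U i σ + V i σ) ⊆ rectSet O) :
    ∃ F, ValidF O F ∧ kappa U O F ≤ maxPay V O := by
  choose F hF hF' using fun i x => exists_undominated (fun i σ => U i σ + V i σ) i x
  refine ⟨F, fun i x _ => mem_of_undominated h (hF i x), ?_⟩
  refine csSup_le ((rectSet_nonempty hO).image _) ?_
  rintro _ ⟨o, ho, rfl⟩
  refine le_trans (Finset.sum_le_sum fun i _ => ?_) (le_sSup_image (fun o => ∑ i, V i o) ho)
  refine csSup_le (Set.insert_nonempty _ _) ?_
  rintro r (rfl | ⟨x, hx, hFx, rfl⟩)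
  · exact hV i o
  · rcases hF' i x with he | hd
    · exact absurd (by rw [← he, hFx]; exact ho i) hx
    · have h1 := hd.1 o
      simp only [hFx, Function.update_eq_self] at h1
      linarith [hV i (Function.update o i x)]

/-- A common bound for all utilities. -/
noncomputable def utilBound (U : ι → (∀ j, S j) → ℝ) : ℝ := ∑ i, ∑ σ, |U i σ|

lemma abs_le_utilBound (U : ι → (∀ j, S j) → ℝ) (i : ι) (σ : ∀ j, S j) :
    |U i σ| ≤ utilBound U :=
  (Finset.single_le_sum (f := fun σ => |U i σ|) (fun _ _ => abs_nonneg _)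
    (Finset.mem_univ σ)).trans
    (Finset.single_le_sum (f := fun i => ∑ σ, |U i σ|)
      (fun _ _ => Finset.sum_nonneg fun _ _ => abs_nonneg _) (Finset.mem_univ i))

/-- The payment promise attached to a family `F`, a slack `ε` and maps `g i` from strategies of
player `i` to profiles of the opponents. With `M = utilBound U`, strategies outside `O_i` earn
nothing; a strategy in `O_i` earns `innerPay + ε` against `𝒪₋ᵢ`, and `2M` against every other
opponent profile, plus a bonus `2M + 1` against the profile which `g i` assigns to it. -/
noncomputable def promise (U : ι → (∀ j, S j) → ℝ) (O : ∀ i, Set (S i)) (F : ∀ i, S i → S i)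
    (ε : ℝ) (g : ∀ i, S i → ((j : {j : ι // j ≠ i}) → S j.1))
    (i : ι) (σ : ∀ j, S j) : ℝ :=
  if σ i ∉ O i then 0
  else if ∀ j, j ≠ i → σ j ∈ O j then innerPay U O F i σ + ε
  else 2 * utilBound U +
    if (fun j : {j : ι // j ≠ i} => σ j.1) = g i (σ i) then 2 * utilBound U + 1 else 0

section Promise

variable (U : ι → (∀ j, S j) → ℝ) (O : ∀ i, Set (S i)) (F : ∀ i, S i → S i)
  {ε : ℝ} (g : ∀ i, S i → ((j : {j : ι // j ≠ i}) → S j.1))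

lemma utilBound_nonneg : 0 ≤ utilBound U :=
  Finset.sum_nonneg fun _ _ => Finset.sum_nonneg fun _ _ => abs_nonneg _

lemma promise_nonneg (hε : 0 < ε) (i : ι) (σ : ∀ j, S j) : 0 ≤ promise U O F ε g i σ := by
  have h1 := innerPay_nonneg U O F i σ
  have h2 := utilBound_nonneg U
  unfold promise
  split_ifs <;> linarith

lemma maxPay_promise_le (hO : ∀ i, (O i).Nonempty) :
    maxPay (promise U O F ε g) O ≤ kappa U O F + Fintype.card ι * ε := by
  refine csSup_le ((rectSet_nonempty hO).image _) ?_
  rintro _ ⟨o, ho, rfl⟩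
  have he : ∀ i, promise U O F ε g i o = innerPay U O F i o + ε := fun i => by
    unfold promise
    rw [if_neg (not_not.mpr (ho i)), if_pos fun j _ => ho j]
  simp only [he, Finset.sum_add_distrib, Finset.sum_const, Finset.card_univ, nsmul_eq_mul]
  have := le_sSup_image (fun o => ∑ i, innerPay U O F i o) ho
  exact add_le_add this le_rfl

lemma undom_promise_subset (hO : ∀ i, (O i).Nonempty) (hF : ValidF O F) (hε : 0 < ε) :
    UndomProfiles (fun i σ => U i σ + promise U O F ε g i σ) ⊆ rectSet O := by
  intro σ hσ i
  by_contra hx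
  refine hσ i ⟨F i (σ i), ?_⟩
  generalize σ i = x at hx
  have hFx := hF i x hx
  have hzero : ∀ τ : ∀ j, S j, promise U O F ε g i (Function.update τ i x) = 0 := fun τ => by
    unfold promise
    rw [if_pos (by simpa using hx)]
  -- Against `𝒪₋ᵢ` the payment to `F i x` covers the deviation gain of `x` with margin `ε`.
  have hin : ∀ τ : ∀ j, S j, (∀ j, j ≠ i → τ j ∈ O j) →
      U i (Function.update τ i x) + ε ≤ U i (Function.update τ i (F i x)) +
        promise U O F ε g i (Function.update τ i (F i x)) := fun τ hτ => by
    have h1 := le_innerPay U O F i (Function.update τ i (F i x)) x hx (by simp)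
    rw [Function.update_idem] at h1
    unfold promise
    rw [if_neg (by simpa using hFx), if_pos (fun j hj => by simpa [hj] using hτ j hj)]
    linarith
  constructor
  · intro τ
    simp only [hzero]
    by_cases hτ : ∀ j, j ≠ i → τ j ∈ O j
    · linarith [hin τ hτ]
    · have h1 := abs_le.mp (abs_le_utilBound U i (Function.update τ i x))
      have h2 := abs_le.mp (abs_le_utilBound U i (Function.update τ i (F i x)))
      have h3 : 2 * utilBound U ≤ promise U O F ε g i (Function.update τ i (F i x)) := by
        have := utilBound_nonneg U
        unfold promise
        rw [if_neg (by simpa using hFx), if_neg (fun h => hτ fun j hj => by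
          simpa [hj] using h j hj)]
        split_ifs <;> linarith
      linarith
  · obtain ⟨τ, hτ⟩ := rectSet_nonempty hO
    refine ⟨τ, ?_⟩
    simp only [hzero]
    linarith [hin τ fun j _ => hτ j]

/-- When each `g i` maps `O_i` injectively into `𝒳₋ᵢ ∖ 𝒪₋ᵢ`, each `x ∈ O_i` is the unique best
reply to `g i x`, hence undominated. -/
lemma undom_promise_eq (hO : ∀ i, (O i).Nonempty) (hF : ValidF O F) (hε : 0 < ε)
    (hg : ∀ i, ∀ x ∈ O i, ∃ j, g i x j ∉ O j.1) (hinj : ∀ i, Set.InjOn (g i) (O i)) :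
    UndomProfiles (fun i σ => U i σ + promise U O F ε g i σ) = rectSet O := by
  refine (undom_promise_subset U O F g hO hF hε).antisymm ?_
  rintro σ hσ i ⟨y, hle, τ₀, hlt⟩
  have hx := hσ i
  generalize σ i = x at *
  have hyx : y ≠ x := by
    rintro rfl
    exact lt_irrefl _ hlt
  obtain ⟨k, hk⟩ := hg i x hx
  -- A full profile in which the opponents of `i` play `g i x`.
  obtain ⟨τ, hτ⟩ : ∃ τ : ∀ j, S j, ∀ j : {j : ι // j ≠ i}, τ j.1 = g i x j :=
    ⟨fun j => if h : j ≠ i then g i x ⟨j, h⟩ else σ j, fun j => by simp [j.2]⟩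
  have hout : ∀ z : S i, ¬ ∀ j, j ≠ i → Function.update τ i z j ∈ O j := fun z h => by
    have := h k.1 k.2
    rw [Function.update_of_ne k.2, hτ k] at this
    exact hk this
  have hres : ∀ z : S i, (fun j : {j : ι // j ≠ i} => Function.update τ i z j.1) = g i x :=
    fun z => funext fun j => by rw [Function.update_of_ne j.2, hτ j]
  have hM := utilBound_nonneg U
  have hxpay : promise U O F ε g i (Function.update τ i x) = 4 * utilBound U + 1 := by
    unfold promise
    rw [if_neg (by simpa using hx), if_neg (hout x), if_pos (by rw [hres]; simp)]
    ring
  have hypay : promise U O F ε g i (Function.update τ i y) ≤ 2 * utilBound U := by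
    unfold promise
    by_cases hy : y ∈ O i
    · rw [if_neg (by simpa using hy), if_neg (hout y), if_neg, add_zero]
      rw [hres, Function.update_self]
      exact fun h => hyx (hinj i hy hx h.symm)
    · rw [if_pos (by simpa using hy)]
      linarith
  have h1 := abs_le.mp (abs_le_utilBound U i (Function.update τ i x))
  have h2 := abs_le.mp (abs_le_utilBound U i (Function.update τ i y))
  have h3 := hle τ
  simp only at h3
  linarith


end Promise

lemma exists_injection_of_equitable {O : ∀ i, Set (S i)} [∀ i, Nonempty (S i)]
    (h : Equitable O) :
    ∃ g : ∀ i, S i → ((j : {j : ι // j ≠ i}) → S j.1),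
      (∀ i, ∀ x ∈ O i, ∃ j, g i x j ∉ O j.1) ∧ ∀ i, Set.InjOn (g i) (O i) := by
  have key : ∀ i, ∃ g : S i → ((j : {j : ι // j ≠ i}) → S j.1),
      (∀ x ∈ O i, ∃ j, g x j ∉ O j.1) ∧ Set.InjOn g (O i) := fun i => by
    obtain ⟨g, hg, hinj⟩ := (Set.toFinite (O i)).exists_injOn_of_encard_le
      (t := {σ : (j : {j : ι // j ≠ i}) → S j.1 | ∃ j, σ j ∉ O j.1}) (by
        rw [← (Set.toFinite _).cast_ncard_eq, ← (Set.toFinite _).cast_ncard_eq]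
        exact_mod_cast h i)
    exact ⟨g, fun x hx => hg hx, hinj⟩
  choose g hg hinj using key
  exact ⟨g, hg, hinj⟩

end Helpers

/-- the minimum of `max_{o ∈ 𝒪} Σ_i V_i(o)` over payment promises `V`
implementing the rectangular region `O` equals `min_{F ∈ ℱ} κ(F)`; moreover, if `G` is
equitable w.r.t. `O`, then the minimum budget `δ ≥ 0` admitting an exact implementation
of `O` with cost at most `δ` also equals `min_{F ∈ ℱ} κ(F)`. -/
theorem min_implementation_cost {ι : Type*} [DecidableEq ι] [Fintype ι]
    {S : ι → Type*} [∀ i, Fintype (S i)] [∀ i, Nonempty (S i)]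
    (U : ι → (∀ j, S j) → ℝ) (O : ∀ i, Set (S i)) (hO : ∀ i, (O i).Nonempty) :
    sInf {d : ℝ | ∃ V : ι → (∀ j, S j) → ℝ, (∀ i σ, 0 ≤ V i σ) ∧
          UndomProfiles (fun i σ => U i σ + V i σ) ⊆ rectSet O ∧
          d = maxPay V O} =
      sInf {k : ℝ | ∃ F : ∀ i, S i → S i, ValidF O F ∧ k = kappa U O F} ∧
    (Equitable O →
      sInf {δ : ℝ | 0 ≤ δ ∧ ∃ V : ι → (∀ j, S j) → ℝ, (∀ i σ, 0 ≤ V i σ) ∧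
            UndomProfiles (fun i σ => U i σ + V i σ) = rectSet O ∧
            gameCost U V ≤ δ} =
        sInf {k : ℝ | ∃ F : ∀ i, S i → S i, ValidF O F ∧ k = kappa U O F}) := by
  have hc : (0 : ℝ) < Fintype.card ι + 1 := by positivity
  -- Dividing by `card ι + 1` instead of `card ι` also covers a game without players.
  have hslack : ∀ ε : ℝ, 0 < ε → 0 < ε / (Fintype.card ι + 1) ∧
      Fintype.card ι * (ε / (Fintype.card ι + 1)) ≤ ε := fun ε hε => by
    refine ⟨div_pos hε hc, ?_⟩
    rw [← mul_div_assoc, div_le_iff₀ hc]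
    nlinarith
  obtain ⟨F₀, hF₀⟩ : ∃ F : ∀ i, S i → S i, ValidF O F :=
    ⟨fun i _ => (hO i).some, fun i _ _ => (hO i).some_mem⟩
  have hkne : {k : ℝ | ∃ F : ∀ i, S i → S i, ValidF O F ∧ k = kappa U O F}.Nonempty :=
    ⟨_, F₀, hF₀, rfl⟩
  have hkbdd : BddBelow {k : ℝ | ∃ F : ∀ i, S i → S i, ValidF O F ∧ k = kappa U O F} :=
    ⟨0, by rintro _ ⟨F, _, rfl⟩; exact kappa_nonneg U hO F⟩
  refine ⟨le_antisymm ?_ ?_, fun hE => ?_⟩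
  · have g : ∀ i, S i → ((j : {j : ι // j ≠ i}) → S j.1) :=
      fun i _ j => Classical.arbitrary (S j.1)
    refine le_csInf hkne ?_
    rintro _ ⟨F, hF, rfl⟩
    refine le_of_forall_pos_le_add fun ε hε => ?_
    obtain ⟨h1, h2⟩ := hslack ε hε
    have hp := maxPay_promise_le U O F (ε := ε / (Fintype.card ι + 1)) g hO
    refine le_trans (csInf_le ?_ ?_) (hp.trans (by linarith))
    swap
    · exact ⟨_, promise_nonneg U O F g h1, undom_promise_subset U O F g hO hF h1, rfl⟩
    refine ⟨0, ?_⟩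
    rintro _ ⟨V, hV, _, rfl⟩
    exact maxPay_nonneg hV hO
  · have g : ∀ i, S i → ((j : {j : ι // j ≠ i}) → S j.1) :=
      fun i _ j => Classical.arbitrary (S j.1)
    refine le_csInf ⟨_, _, promise_nonneg U O F₀ g one_pos,
      undom_promise_subset U O F₀ g hO hF₀ one_pos, rfl⟩ ?_
    rintro _ ⟨V, hV, hsub, rfl⟩
    obtain ⟨F, hF, hle⟩ := exists_kappa_le_maxPay U hO hV hsub
    exact (csInf_le hkbdd ⟨F, hF, rfl⟩).trans hle
  · -- For an exact implementation the cost is the maximal payment over `𝒪`.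
    have hcost : ∀ V : ι → (∀ j, S j) → ℝ,
        UndomProfiles (fun i σ => U i σ + V i σ) = rectSet O → gameCost U V = maxPay V O :=
      fun V h => by unfold gameCost maxPay; rw [h]
    obtain ⟨g, hg, hinj⟩ := exists_injection_of_equitable hE
    refine le_antisymm (le_csInf hkne ?_) ?_
    · rintro _ ⟨F, hF, rfl⟩
      refine le_of_forall_pos_le_add fun ε hε => ?_
      obtain ⟨h1, h2⟩ := hslack ε hε
      have hex := undom_promise_eq U O F g hO hF h1 hg hinj
      have hn := promise_nonneg U O F g h1
      have hp := maxPay_promise_le U O F (ε := ε / (Fintype.card ι + 1)) g hO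
      refine le_trans (csInf_le ⟨0, fun δ h => h.1⟩ ?_) (hp.trans (by linarith))
      exact ⟨maxPay_nonneg hn hO, _, hn, hex, (hcost _ hex).le⟩
    · have hex := undom_promise_eq U O F₀ g hO hF₀ one_pos hg hinj
      have hn := promise_nonneg U O F₀ g one_pos
      refine le_csInf ⟨_, maxPay_nonneg hn hO, _, hn, hex, (hcost _ hex).le⟩ ?_
      rintro δ ⟨_, V, hV, hex, hle⟩
      rw [hcost V hex] at hle
      obtain ⟨F, hF, hle'⟩ := exists_kappa_le_maxPay U hO hV hex.subset
      exact (csInf_le hkbdd ⟨F, hF, rfl⟩).trans (hle'.trans hle)
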